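/- arXiv:1502.00710 — 5 statements merged into one kernel-verified Lean document; each statement's English description precedes it below -/
import Mathlib

section
/- Let n ≥ 1, let (Y,d) be a metric space containing at least two points, let y₀ ∈ Y, 0 < β ≤ 1, and equip ℝⁿ × Y with the metric D((x₁,y₁),(x₂,y₂)) = max{|x₁−x₂|^β, d(y₁,y₂)}. Let γ: ℝⁿ × Y → ℝⁿ × Y have the form γ(x,y) = (a A(x + x₀ + h(y)), σ(y)) where a > 0, A ∈ O(n), x₀ ∈ ℝⁿ, h: Y → ℝⁿ is Lipschitz as a map (Y,d) → (ℝⁿ,|·|^β) with h(y₀) = 0, and σ is a similarity of Y with similarity constant ã > 0. If γ is an (M,C)-quasisimilarity of (ℝⁿ × Y, D), then C/M ≤ ã ≤ MC and C/M ≤ a^β ≤ MC; in particular M^{-2} ≤ ã / a^β ≤ M². -/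
/-- The metric `D((x₁,y₁),(x₂,y₂)) = max{|x₁−x₂|^β, d(y₁,y₂)}` on `ℝⁿ × Y`. -/
noncomputable def prodDist (n : ℕ) {Y : Type*} [MetricSpace Y] (β : ℝ)
    (p q : EuclideanSpace ℝ (Fin n) × Y) : ℝ :=
  max (‖p.1 - q.1‖ ^ β) (dist p.2 q.2)

/-- If `γ(x,y) = (a A (x + x₀ + h y), σ y)` (with `a > 0`, `A ∈ O(n)`,
`h` Lipschitz into `(ℝⁿ,|·|^β)` with `h y₀ = 0`, `σ` a similarity of constant `a'`) is an
`(M,C)`-quasisimilarity of `(ℝⁿ × Y, D)`, then `C/M ≤ a' ≤ MC` and `C/M ≤ a^β ≤ MC`; in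
particular `M⁻² ≤ a' / a^β ≤ M²`. -/
theorem quasisimilarity_constant_bounds (n : ℕ) (hn : 1 ≤ n) {Y : Type*} [MetricSpace Y]
    (hY : ∃ y y' : Y, y ≠ y') (y₀ : Y) (β : ℝ) (hβ0 : 0 < β) (hβ1 : β ≤ 1)
    (a : ℝ) (ha : 0 < a)
    (A : EuclideanSpace ℝ (Fin n) ≃ₗᵢ[ℝ] EuclideanSpace ℝ (Fin n))
    (x₀ : EuclideanSpace ℝ (Fin n)) (h : Y → EuclideanSpace ℝ (Fin n))
    (hLip : ∃ L : ℝ, ∀ y₁ y₂ : Y, ‖h y₁ - h y₂‖ ^ β ≤ L * dist y₁ y₂)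
    (hh0 : h y₀ = 0)
    (σ : Y → Y) (hσbij : Function.Bijective σ)
    (a' : ℝ) (ha' : 0 < a') (hσ : ∀ y y' : Y, dist (σ y) (σ y') = a' * dist y y')
    (γ : EuclideanSpace ℝ (Fin n) × Y → EuclideanSpace ℝ (Fin n) × Y)
    (hγ : ∀ p, γ p = (a • A (p.1 + x₀ + h p.2), σ p.2))
    (hγbij : Function.Bijective γ)
    (M C : ℝ) (hM : 1 ≤ M) (hC : 0 < C)
    (hqs : ∀ p q : EuclideanSpace ℝ (Fin n) × Y,
      C / M * prodDist n β p q ≤ prodDist n β (γ p) (γ q) ∧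
        prodDist n β (γ p) (γ q) ≤ M * C * prodDist n β p q) :
    (C / M ≤ a' ∧ a' ≤ M * C) ∧ (C / M ≤ a ^ β ∧ a ^ β ≤ M * C) ∧
      (M ^ 2)⁻¹ ≤ a' / a ^ β ∧ a' / a ^ β ≤ M ^ 2 := by
  have hM0 : 0 < M := by linarith
  have hCM : 0 < C / M := div_pos hC hM0
  have hab : 0 < a ^ β := Real.rpow_pos_of_pos ha β
  obtain ⟨y, y', hyy⟩ := hY
  have hd : 0 < dist y y' := dist_pos.mpr hyy
  have h1 : C / M ≤ a' := by
    have h2 := (hqs (-h y, y) (-h y', y')).1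
    have h3 : prodDist n β (γ (-h y, y)) (γ (-h y', y')) = a' * dist y y' := by
      have e1 : -h y + x₀ + h y = x₀ := by abel
      have e2 : -h y' + x₀ + h y' = x₀ := by abel
      simp only [prodDist, hγ, hσ, e1, e2, sub_self, norm_zero, Real.zero_rpow hβ0.ne']
      exact max_eq_right (by positivity)
    have h4 : dist y y' ≤ prodDist n β (-h y, y) (-h y', y') := le_max_right _ _
    rw [h3] at h2
    exact le_of_mul_le_mul_right ((mul_le_mul_of_nonneg_left h4 hCM.le).trans h2) hd
  have h2 : a' ≤ M * C := by
    have h2 := (hqs (0, y) (0, y')).2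
    have h3 : prodDist n β ((0 : EuclideanSpace ℝ (Fin n)), y) (0, y') = dist y y' := by
      simp only [prodDist, sub_self, norm_zero, Real.zero_rpow hβ0.ne']
      exact max_eq_right hd.le
    have h4 : a' * dist y y' ≤ prodDist n β (γ (0, y)) (γ (0, y')) := by
      simp only [prodDist, hγ, hσ]
      exact le_max_right _ _
    rw [h3] at h2
    exact le_of_mul_le_mul_right (h4.trans h2) hd
  have h3 : C / M ≤ a ^ β ∧ a ^ β ≤ M * C := by
    let e : EuclideanSpace ℝ (Fin n) := EuclideanSpace.single ⟨0, hn⟩ 1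
    have he : ‖e‖ = 1 := by simp [e]
    have h5 := hqs (e, y₀) (0, y₀)
    have h6 : prodDist n β (e, y₀) (0, y₀) = 1 := by simp [prodDist, he]
    have h7 : prodDist n β (γ (e, y₀)) (γ (0, y₀)) = a ^ β := by
      have e1 : e + x₀ + h y₀ - (0 + x₀ + h y₀) = e := by abel
      simp only [prodDist, hγ, dist_self, ← smul_sub, ← map_sub, e1, norm_smul,
        LinearIsometryEquiv.norm_map, he, mul_one, Real.norm_of_nonneg ha.le]
      exact max_eq_left hab.le
    rw [h6, h7, mul_one, mul_one] at h5
    exact h5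
  obtain ⟨h3, h4⟩ := h3
  refine ⟨⟨h1, h2⟩, ⟨h3, h4⟩, ?_, ?_⟩
  · rw [le_div_iff₀ hab]
    calc (M ^ 2)⁻¹ * a ^ β ≤ (M ^ 2)⁻¹ * (M * C) := by gcongr
      _ = C / M := by field_simp
      _ ≤ a' := h1
  · rw [div_le_iff₀ hab]
    calc a' ≤ M * C := h2
      _ = M ^ 2 * (C / M) := by field_simp
      _ ≤ M ^ 2 * a ^ β := by gcongr
end

section
/- Let n ≥ 1, let (Y,d) be a metric space with at least two points and basepoint y₀, 0 < β ≤ 1, and equip ℝⁿ × Y with the metric D((x₁,y₁),(x₂,y₂)) = max{|x₁−x₂|^β, d(y₁,y₂)}. Suppose a group Γ acts on ℝⁿ × Y such that every γ ∈ Γ has the form γ(x,y) = (a_γ A_γ(x + x_γ + h_γ(y)), σ_γ(y)) with a_γ > 0, A_γ ∈ O(n), x_γ ∈ ℝⁿ, h_γ: Y → ℝⁿ Lipschitz as a map (Y,d) → (ℝⁿ,|·|^β) with h_γ(y₀) = 0, and σ_γ a similarity of Y, and suppose Γ acts as a uniform quasisimilarity group of (ℝⁿ × Y, D). Then for every γ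 ∈ Γ the similarity constant of σ_γ equals a_γ^β, i.e. d(σ_γ(y₁), σ_γ(y₂)) = a_γ^β · d(y₁,y₂) for all y₁, y₂ ∈ Y. -/
theorem le_of_pow_le_mul_pow (b c K : ℝ) (hc : 0 < c)
    (H : ∀ k : ℕ, b ^ k ≤ K * c ^ k) : b ≤ c := by
  by_contra hlt
  push Not at hlt
  have h1 : 1 < b / c := by rwa [one_lt_div hc]
  obtain ⟨k, hk⟩ := pow_unbounded_of_one_lt K h1
  have h2 := H k
  rw [div_pow, lt_div_iff₀ (by positivity)] at hk
  linarith

/-- Lemma 3.1(1): If a group `Γ` acts on `ℝⁿ × Y` by maps of the form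
`γ(x,y) = (a_γ A_γ(x + x_γ + h_γ y), σ_γ y)` and acts as a uniform quasisimilarity group
of `(ℝⁿ × Y, D)`, then the similarity constant of `σ_γ` is `a_γ^β`:
`d(σ_γ y₁, σ_γ y₂) = a_γ^β · d(y₁,y₂)`. -/
theorem similarity_constant_eq_rpow (n : ℕ) (hn : 1 ≤ n) {Y : Type*} [MetricSpace Y]
    (hY : ∃ y y' : Y, y ≠ y') (y₀ : Y) (β : ℝ) (hβ0 : 0 < β) (hβ1 : β ≤ 1)
    {Γ : Type*} [Group Γ]
    (ρ : Γ →* Equiv.Perm (EuclideanSpace ℝ (Fin n) × Y))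
    (a : Γ → ℝ) (ha : ∀ γ : Γ, 0 < a γ)
    (A : Γ → EuclideanSpace ℝ (Fin n) ≃ₗᵢ[ℝ] EuclideanSpace ℝ (Fin n))
    (x : Γ → EuclideanSpace ℝ (Fin n))
    (h : Γ → Y → EuclideanSpace ℝ (Fin n))
    (hLip : ∀ γ : Γ, ∃ L : ℝ, ∀ y₁ y₂ : Y, ‖h γ y₁ - h γ y₂‖ ^ β ≤ L * dist y₁ y₂)
    (hh0 : ∀ γ : Γ, h γ y₀ = 0)
    (σ : Γ → Y → Y)
    (hσ : ∀ γ : Γ, Function.Bijective (σ γ) ∧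
      ∃ c : ℝ, 0 < c ∧ ∀ y y' : Y, dist (σ γ y) (σ γ y') = c * dist y y')
    (hform : ∀ (γ : Γ) (p : EuclideanSpace ℝ (Fin n) × Y),
      ρ γ p = (a γ • A γ (p.1 + x γ + h γ p.2), σ γ p.2))
    (M : ℝ) (hM : 1 ≤ M)
    (hqs : ∀ γ : Γ, ∃ C : ℝ, 0 < C ∧
      ∀ p q : EuclideanSpace ℝ (Fin n) × Y,
        C / M * prodDist n β p q ≤ prodDist n β (ρ γ p) (ρ γ q) ∧
          prodDist n β (ρ γ p) (ρ γ q) ≤ M * C * prodDist n β p q) :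
    ∀ (γ : Γ) (y₁ y₂ : Y), dist (σ γ y₁) (σ γ y₂) = a γ ^ β * dist y₁ y₂ := by
  obtain ⟨z, z', hz⟩ := hY
  have hd : 0 < dist z z' := dist_pos.mpr hz
  have hM0 : 0 < M := by linarith
  obtain ⟨v, hv⟩ : ∃ v : EuclideanSpace ℝ (Fin n), ‖v‖ = 1 :=
    ⟨EuclideanSpace.single ⟨0, hn⟩ 1, by simp⟩
  choose hbij c hc hcd using hσ
  -- comparison of the two constants
  have key : ∀ γ, a γ ^ β ≤ M ^ 2 * c γ ∧ c γ ≤ M ^ 2 * a γ ^ β := by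
    intro γ
    obtain ⟨C, hC, hb⟩ := hqs γ
    have e1 := hb (v, y₀) (0, y₀)
    have e2 := (hb (-h γ z, z) (-h γ z', z')).1
    have e3 := (hb (0, z) (0, z')).2
    have q1 : prodDist n β (v, y₀) ((0 : EuclideanSpace ℝ (Fin n)), y₀) = 1 := by
      simp [prodDist, hv]
    have q2 : prodDist n β (ρ γ (v, y₀)) (ρ γ (0, y₀)) = a γ ^ β := by
      have : ‖a γ • A γ (v + x γ + h γ y₀) - a γ • A γ (0 + x γ + h γ y₀)‖ = a γ := by
        rw [← smul_sub, ← map_sub, norm_smul, LinearIsometryEquiv.norm_map,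
          show v + x γ + h γ y₀ - (0 + x γ + h γ y₀) = v by abel, hv,
          Real.norm_of_nonneg (ha γ).le, mul_one]
      simp only [prodDist, hform, this, dist_self]
      exact max_eq_left (Real.rpow_nonneg (ha γ).le _)
    have q3 : prodDist n β (ρ γ (-h γ z, z)) (ρ γ (-h γ z', z')) = c γ * dist z z' := by
      have : a γ • A γ (-h γ z + x γ + h γ z) - a γ • A γ (-h γ z' + x γ + h γ z') = 0 := by
        rw [show -h γ z + x γ + h γ z = x γ by abel,
          show -h γ z' + x γ + h γ z' = x γ by abel, sub_self]
      simp only [prodDist, hform, this, hcd, norm_zero, Real.zero_rpow hβ0.ne']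
      exact max_eq_right (mul_pos (hc γ) hd).le
    have q4 : dist z z' ≤ prodDist n β (-h γ z, z) (-h γ z', z') := le_max_right _ _
    have q5 : prodDist n β ((0 : EuclideanSpace ℝ (Fin n)), z) (0, z') = dist z z' := by
      simp [prodDist, Real.zero_rpow hβ0.ne']
    have q6 : c γ * dist z z' ≤ prodDist n β (ρ γ (0, z)) (ρ γ (0, z')) := by
      rw [← hcd]
      simp only [prodDist, hform]
      exact le_max_right _ _
    rw [q1, q2, mul_one, mul_one] at e1
    rw [q3] at e2
    rw [q5] at e3
    have r1 : C / M ≤ c γ := by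
      have : C / M * dist z z' ≤ c γ * dist z z' :=
        (mul_le_mul_of_nonneg_left q4 (by positivity)).trans e2
      exact le_of_mul_le_mul_right this hd
    have r2 : c γ ≤ M * C := le_of_mul_le_mul_right (q6.trans e3) hd
    obtain ⟨r3, r4⟩ := e1
    rw [div_le_iff₀ hM0] at r1 r3
    constructor
    · calc a γ ^ β ≤ M * C := r4
        _ ≤ M * (c γ * M) := by gcongr
        _ = M ^ 2 * c γ := by ring
    · calc c γ ≤ M * C := r2
        _ ≤ M * (a γ ^ β * M) := by gcongr
        _ = M ^ 2 * a γ ^ β := by ring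
  -- scaling of the two factors
  have sc : ∀ γ (p q : EuclideanSpace ℝ (Fin n) × Y), p.2 = q.2 →
      ‖(ρ γ p).1 - (ρ γ q).1‖ = a γ * ‖p.1 - q.1‖ := by
    intro γ p q hpq
    simp only [hform, hpq]
    rw [← smul_sub, ← map_sub, norm_smul, LinearIsometryEquiv.norm_map,
      Real.norm_of_nonneg (ha γ).le]
    congr 2
    abel
  have sd : ∀ γ (p q : EuclideanSpace ℝ (Fin n) × Y),
      dist (ρ γ p).2 (ρ γ q).2 = c γ * dist p.2 q.2 := by
    intro γ p q
    simp only [hform, hcd]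
  have amul : ∀ γ δ, a (γ * δ) = a γ * a δ := by
    intro γ δ
    have h1 := sc (γ * δ) (v, y₀) (0, y₀) rfl
    rw [map_mul, Equiv.Perm.mul_apply, Equiv.Perm.mul_apply,
      sc γ _ _ (by simp only [hform]), sc δ (v, y₀) (0, y₀) rfl] at h1
    simp only [sub_zero, hv, mul_one] at h1
    exact h1.symm
  have cmul : ∀ γ δ, c (γ * δ) = c γ * c δ := by
    intro γ δ
    have h1 := sd (γ * δ) (0, z) (0, z')
    rw [map_mul, Equiv.Perm.mul_apply, Equiv.Perm.mul_apply, sd, sd, ← mul_assoc] at h1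
    exact (mul_right_cancel₀ hd.ne' h1).symm
  have a1 : a 1 = 1 := by
    have h1 := amul 1 1
    rw [mul_one] at h1
    exact (mul_eq_left₀ (ha 1).ne').mp h1.symm
  have c1 : c 1 = 1 := by
    have h1 := cmul 1 1
    rw [mul_one] at h1
    exact (mul_eq_left₀ (hc 1).ne').mp h1.symm
  have apow : ∀ γ (k : ℕ), a (γ ^ k) ^ β = (a γ ^ β) ^ k := by
    intro γ k
    induction k with
    | zero => simp [a1]
    | succ k ih => rw [pow_succ, amul, Real.mul_rpow (ha _).le (ha _).le, ih, pow_succ]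
  have cpow : ∀ γ (k : ℕ), c (γ ^ k) = c γ ^ k := by
    intro γ k
    induction k with
    | zero => simp [c1]
    | succ k ih => rw [pow_succ, cmul, ih, pow_succ]
  intro γ y₁ y₂
  have hfin : c γ = a γ ^ β := by
    apply le_antisymm
    · apply le_of_pow_le_mul_pow _ _ (M ^ 2) (Real.rpow_pos_of_pos (ha γ) β)
      intro k
      rw [← cpow, ← apow]
      exact (key _).2
    · apply le_of_pow_le_mul_pow _ _ (M ^ 2) (hc γ)
      intro k
      rw [← cpow, ← apow]
      exact (key _).1
  rw [hcd, hfin]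
end

section
/- Let n ≥ 1, let (Y,d) be a metric space with at least two points and basepoint y₀, 0 < β ≤ 1, and equip ℝⁿ × Y with the metric D((x₁,y₁),(x₂,y₂)) = max{|x₁−x₂|^β, d(y₁,y₂)}. Suppose a group Γ acts on ℝⁿ × Y such that every γ ∈ Γ has the form γ(x,y) = (a_γ A_γ(x + x_γ + h_γ(y)), σ_γ(y)) with a_γ > 0, A_γ ∈ O(n), x_γ ∈ ℝⁿ, h_γ: Y → ℝⁿ Lipschitz as a map (Y,d) → (ℝⁿ,|·|^β) with h_γ(y₀) = 0, and σ_γ a similarity of Y, and suppose Γ acts as a uniform quasisimilarity group of (ℝⁿ × Y, D) with uniformity constant M. Then there is a constant C > 0 (one may take C = M²) such that for every γ ∈ Γ the map h_γ is C-Lipschitz as a map (Y,d) → (ℝⁿ,|·|^β), i.e. |h_γ(y₁) − h_γ(y₂)|^β ≤ C·d(y₁,y₂) for all y₁, y₂ ∈ Y. -/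
/-- Lemma 3.1(2): If a group `Γ` acts on `ℝⁿ × Y` by maps of the form
`γ(x,y) = (a_γ A_γ(x + x_γ + h_γ y), σ_γ y)` and acts as a uniform quasisimilarity group
of `(ℝⁿ × Y, D)` with uniformity constant `M`, then there is `C > 0` (namely `C = M²`)
such that every `h_γ` is `C`-Lipschitz as a map `(Y,d) → (ℝⁿ,|·|^β)`:
`|h_γ y₁ - h_γ y₂|^β ≤ M² · d(y₁,y₂)`. -/
theorem h_uniformly_lipschitz (n : ℕ) (hn : 1 ≤ n) {Y : Type*} [MetricSpace Y]
    (hY : ∃ y y' : Y, y ≠ y') (y₀ : Y) (β : ℝ) (hβ0 : 0 < β) (hβ1 : β ≤ 1)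
    {Γ : Type*} [Group Γ]
    (ρ : Γ →* Equiv.Perm (EuclideanSpace ℝ (Fin n) × Y))
    (a : Γ → ℝ) (ha : ∀ γ : Γ, 0 < a γ)
    (A : Γ → EuclideanSpace ℝ (Fin n) ≃ₗᵢ[ℝ] EuclideanSpace ℝ (Fin n))
    (x : Γ → EuclideanSpace ℝ (Fin n))
    (h : Γ → Y → EuclideanSpace ℝ (Fin n))
    (hLip : ∀ γ : Γ, ∃ L : ℝ, ∀ y₁ y₂ : Y, ‖h γ y₁ - h γ y₂‖ ^ β ≤ L * dist y₁ y₂)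
    (hh0 : ∀ γ : Γ, h γ y₀ = 0)
    (σ : Γ → Y → Y)
    (hσ : ∀ γ : Γ, Function.Bijective (σ γ) ∧
      ∃ c : ℝ, 0 < c ∧ ∀ y y' : Y, dist (σ γ y) (σ γ y') = c * dist y y')
    (hform : ∀ (γ : Γ) (p : EuclideanSpace ℝ (Fin n) × Y),
      ρ γ p = (a γ • A γ (p.1 + x γ + h γ p.2), σ γ p.2))
    (M : ℝ) (hM : 1 ≤ M)
    (hqs : ∀ γ : Γ, ∃ C : ℝ, 0 < C ∧
      ∀ p q : EuclideanSpace ℝ (Fin n) × Y,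
        C / M * prodDist n β p q ≤ prodDist n β (ρ γ p) (ρ γ q) ∧
          prodDist n β (ρ γ p) (ρ γ q) ≤ M * C * prodDist n β p q) :
    0 < M ^ 2 ∧
      ∀ (γ : Γ) (y₁ y₂ : Y), ‖h γ y₁ - h γ y₂‖ ^ β ≤ M ^ 2 * dist y₁ y₂ := by
  have hM0 : 0 < M := by linarith
  refine ⟨by positivity, ?_⟩
  intro γ y₁ y₂
  obtain ⟨C, hC, hq⟩ := hqs γ
  have hnorm : ∀ u v : EuclideanSpace ℝ (Fin n),
      ‖a γ • A γ u - a γ • A γ v‖ ^ β = a γ ^ β * ‖u - v‖ ^ β := by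
    intro u v
    rw [← smul_sub, ← map_sub, norm_smul, LinearIsometryEquiv.norm_map, Real.norm_eq_abs,
      abs_of_pos (ha γ), Real.mul_rpow (ha γ).le (norm_nonneg _)]
  have haβ : 0 < a γ ^ β := Real.rpow_pos_of_pos (ha γ) β
  have h1 : C / M ≤ a γ ^ β := by
    have key := (hq (EuclideanSpace.single ⟨0, hn⟩ (1 : ℝ), y₀) (0, y₀)).1
    simp only [hform, prodDist, hnorm, dist_self] at key
    have e : EuclideanSpace.single (⟨0, hn⟩ : Fin n) (1 : ℝ) + x γ + h γ y₀
        - (0 + x γ + h γ y₀) = EuclideanSpace.single (⟨0, hn⟩ : Fin n) (1 : ℝ) := by abel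
    have e1 : ‖EuclideanSpace.single (⟨0, hn⟩ : Fin n) (1 : ℝ)‖ = 1 := by simp
    rw [e, sub_zero, e1, Real.one_rpow, mul_one, max_eq_left zero_le_one,
      max_eq_left haβ.le, mul_one] at key
    exact key
  have h2 : a γ ^ β * ‖h γ y₁ - h γ y₂‖ ^ β ≤ M * C * dist y₁ y₂ := by
    have key := (hq (0, y₁) (0, y₂)).2
    simp only [hform, prodDist, hnorm] at key
    have e : (0 : EuclideanSpace ℝ (Fin n)) + x γ + h γ y₁ - (0 + x γ + h γ y₂)
        = h γ y₁ - h γ y₂ := by abel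
    rw [e, sub_zero, norm_zero, Real.zero_rpow hβ0.ne', max_eq_right dist_nonneg] at key
    exact (le_max_left _ _).trans key
  have h3 : C ≤ a γ ^ β * M := (div_le_iff₀ hM0).1 h1
  refine le_of_mul_le_mul_left ?_ haβ
  calc _ ≤ M * C * dist y₁ y₂ := h2
    _ ≤ M * (a γ ^ β * M) * dist y₁ y₂ := by gcongr
    _ = _ := by ring
end

section
/- Let (Y,d) be a metric space with basepoint y₀, 0 < β ≤ 1, and E the space of maps h: Y → ℝⁿ Lipschitz as maps (Y,d) → (ℝⁿ,|·|^β) with h(y₀) = 0. The set G of all bijections of ℝⁿ × Y of the form γ(x,y) = (a A(x + x₀ + h(y)), σ(y)), with a > 0, A ∈ O(n), x₀ ∈ ℝⁿ, h ∈ E, and σ a bijective similarity of Y, is closed under composition, the data (a, A, x₀, h, σ) of such a map is uniquely determined, and for two such maps γ₁, γ₂ the composite γ₁ ∘ γ₂ satisfies h_{γ₁∘γ₂} = h_{γ₂} + π_{γ₂} h_{γ₁}, where (π_γ h)(y) = a_γ^{-1} A_γ^{-1} h(σ_γ(y)) − a_γ^{-1} A_γ^{-1} h(σ_γ(y₀)).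 Consequently, for any group Γ of maps of this form, the map b: Γ* → E, b_γ = h_γ, satisfies the 1-cocycle identity b_{γ₂*γ₁} = b_{γ₂} + π_{γ₂} b_{γ₁} for the Γ*-module structure π on E. -/
/-- `h : Y → ℝⁿ` is Lipschitz as a map `(Y,d) → (ℝⁿ,|·|^β)` and vanishes at `y₀`. -/
def IsHolderZero (n : ℕ) {Y : Type*} [MetricSpace Y] (y₀ : Y) (β : ℝ)
    (h : Y → EuclideanSpace ℝ (Fin n)) : Prop :=
  (∃ L : ℝ, ∀ y₁ y₂ : Y, ‖h y₁ - h y₂‖ ^ β ≤ L * dist y₁ y₂) ∧ h y₀ = 0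

/-- `σ` is a (bijective) similarity of `Y` with similarity constant `c`. -/
def IsSimilarityWith {Y : Type*} [MetricSpace Y] (c : ℝ) (σ : Y → Y) : Prop :=
  Function.Bijective σ ∧ ∀ y y' : Y, dist (σ y) (σ y') = c * dist y y'

/-- The map `(x,y) ↦ (a A (x + x₀ + h y), σ y)` of `ℝⁿ × Y`. -/
noncomputable def formMap (n : ℕ) {Y : Type*} (a : ℝ)
    (A : EuclideanSpace ℝ (Fin n) ≃ₗᵢ[ℝ] EuclideanSpace ℝ (Fin n))
    (x₀ : EuclideanSpace ℝ (Fin n)) (h : Y → EuclideanSpace ℝ (Fin n)) (σ : Y → Y) :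
    EuclideanSpace ℝ (Fin n) × Y → EuclideanSpace ℝ (Fin n) × Y :=
  fun p => (a • A (p.1 + x₀ + h p.2), σ p.2)

/-- The map `(π_γ h)(y) = a⁻¹ A⁻¹ h(σ y) − a⁻¹ A⁻¹ h(σ y₀)`. -/
noncomputable def piMap (n : ℕ) {Y : Type*} (y₀ : Y) (a : ℝ)
    (A : EuclideanSpace ℝ (Fin n) ≃ₗᵢ[ℝ] EuclideanSpace ℝ (Fin n))
    (σ : Y → Y) (h : Y → EuclideanSpace ℝ (Fin n)) : Y → EuclideanSpace ℝ (Fin n) :=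
  fun y => a⁻¹ • A.symm (h (σ y)) - a⁻¹ • A.symm (h (σ y₀))

theorem aux_comp (n : ℕ) {Y : Type*} (y₀ : Y) (a₁ a₂ : ℝ) (ha₂ : 0 < a₂)
    (A₁ A₂ : EuclideanSpace ℝ (Fin n) ≃ₗᵢ[ℝ] EuclideanSpace ℝ (Fin n))
    (x₁ x₂ : EuclideanSpace ℝ (Fin n)) (h₁ h₂ : Y → EuclideanSpace ℝ (Fin n)) (σ₁ σ₂ : Y → Y) :
    formMap n a₁ A₁ x₁ h₁ σ₁ ∘ formMap n a₂ A₂ x₂ h₂ σ₂ =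
          formMap n (a₁ * a₂) (A₂.trans A₁)
            (x₂ + a₂⁻¹ • A₂.symm (x₁ + h₁ (σ₂ y₀)))
            (h₂ + piMap n y₀ a₂ A₂ σ₂ h₁) (σ₁ ∘ σ₂) := by
  funext p
  refine Prod.ext ?_ rfl
  simp only [formMap, piMap, Function.comp_apply, Pi.add_apply, LinearIsometryEquiv.trans_apply,
    mul_smul]
  congr 1
  simp only [← map_smul A₁]
  congr 1
  simp only [map_add, map_sub, map_smul, LinearIsometryEquiv.apply_symm_apply, smul_add, smul_sub,
    smul_inv_smul₀ ha₂.ne']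
  abel

theorem aux_holder (n : ℕ) {Y : Type*} [MetricSpace Y] (y₀ : Y) (β : ℝ) (hβ0 : 0 < β)
    (hβ1 : β ≤ 1) (a₂ : ℝ) (ha₂ : 0 < a₂)
    (A₂ : EuclideanSpace ℝ (Fin n) ≃ₗᵢ[ℝ] EuclideanSpace ℝ (Fin n))
    (h₁ h₂ : Y → EuclideanSpace ℝ (Fin n)) (σ₂ : Y → Y)
    (H₁ : IsHolderZero n y₀ β h₁) (H₂ : IsHolderZero n y₀ β h₂)
    (hs : ∃ c : ℝ, 0 < c ∧ IsSimilarityWith c σ₂) :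
    IsHolderZero n y₀ β (h₂ + piMap n y₀ a₂ A₂ σ₂ h₁) := by
  obtain ⟨⟨L₁, hL₁⟩, -⟩ := H₁
  obtain ⟨⟨L₂, hL₂⟩, hz⟩ := H₂
  obtain ⟨c, hc, -, hd⟩ := hs
  refine ⟨⟨L₂ + a₂⁻¹ ^ β * (L₁ * c), fun y z => ?_⟩, by simp [piMap, hz]⟩
  have e : (h₂ + piMap n y₀ a₂ A₂ σ₂ h₁) y - (h₂ + piMap n y₀ a₂ A₂ σ₂ h₁) z =
      (h₂ y - h₂ z) + a₂⁻¹ • A₂.symm (h₁ (σ₂ y) - h₁ (σ₂ z)) := by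
    simp only [piMap, Pi.add_apply, map_sub, smul_sub]
    abel
  have hi : 0 < a₂⁻¹ := inv_pos.mpr ha₂
  have en : ‖a₂⁻¹ • A₂.symm (h₁ (σ₂ y) - h₁ (σ₂ z))‖ = a₂⁻¹ * ‖h₁ (σ₂ y) - h₁ (σ₂ z)‖ := by
    rw [norm_smul, LinearIsometryEquiv.norm_map, Real.norm_of_nonneg hi.le]
  have h1 := hL₁ (σ₂ y) (σ₂ z)
  rw [hd] at h1
  rw [e]
  calc _ ≤ (‖h₂ y - h₂ z‖ + a₂⁻¹ * ‖h₁ (σ₂ y) - h₁ (σ₂ z)‖) ^ β := by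
        rw [← en]
        exact Real.rpow_le_rpow (norm_nonneg _) (norm_add_le _ _) hβ0.le
    _ ≤ ‖h₂ y - h₂ z‖ ^ β + (a₂⁻¹ * ‖h₁ (σ₂ y) - h₁ (σ₂ z)‖) ^ β :=
        Real.rpow_add_le_add_rpow (norm_nonneg _) (by positivity) hβ0.le hβ1
    _ = ‖h₂ y - h₂ z‖ ^ β + a₂⁻¹ ^ β * ‖h₁ (σ₂ y) - h₁ (σ₂ z)‖ ^ β := by
        rw [Real.mul_rpow hi.le (norm_nonneg _)]
    _ ≤ L₂ * dist y z + a₂⁻¹ ^ β * (L₁ * (c * dist y z)) := by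
        gcongr
        exact hL₂ y z
    _ = _ := by ring

theorem aux_sim {Y : Type*} [MetricSpace Y] (σ₁ σ₂ : Y → Y)
    (hs₁ : ∃ c : ℝ, 0 < c ∧ IsSimilarityWith c σ₁)
    (hs₂ : ∃ c : ℝ, 0 < c ∧ IsSimilarityWith c σ₂) :
    ∃ c : ℝ, 0 < c ∧ IsSimilarityWith c (σ₁ ∘ σ₂) := by
  obtain ⟨c, hc, hb, hd⟩ := hs₁
  obtain ⟨c', hc', hb', hd'⟩ := hs₂
  refine ⟨c * c', mul_pos hc hc', hb.comp hb', fun y z => ?_⟩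
  simp only [Function.comp_apply, hd, hd', mul_assoc]

theorem aux_unique (n : ℕ) (hn : 1 ≤ n) {Y : Type*} (y₀ : Y) (a₁ a₂ : ℝ)
    (ha₁ : 0 < a₁) (ha₂ : 0 < a₂)
    (A₁ A₂ : EuclideanSpace ℝ (Fin n) ≃ₗᵢ[ℝ] EuclideanSpace ℝ (Fin n))
    (x₁ x₂ : EuclideanSpace ℝ (Fin n)) (h₁ h₂ : Y → EuclideanSpace ℝ (Fin n)) (σ₁ σ₂ : Y → Y)
    (z₁ : h₁ y₀ = 0) (z₂ : h₂ y₀ = 0)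
    (H : formMap n a₁ A₁ x₁ h₁ σ₁ = formMap n a₂ A₂ x₂ h₂ σ₂) :
    a₁ = a₂ ∧ A₁ = A₂ ∧ x₁ = x₂ ∧ h₁ = h₂ ∧ σ₁ = σ₂ := by
  have H1 : ∀ v y, a₁ • A₁ (v + x₁ + h₁ y) = a₂ • A₂ (v + x₂ + h₂ y) := fun v y =>
    congrArg Prod.fst (congrFun H (v, y))
  have H2 : σ₁ = σ₂ := funext fun y => congrArg Prod.snd (congrFun H (0, y))
  have key : ∀ y, x₁ + h₁ y = x₂ + h₂ y := by
    intro y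
    have := H1 (-(x₁ + h₁ y)) y
    rw [show -(x₁ + h₁ y) + x₁ + h₁ y = 0 by abel, map_zero, smul_zero, eq_comm,
      smul_eq_zero_iff_right ha₂.ne', map_eq_zero_iff A₂ A₂.injective] at this
    rw [← sub_eq_zero, ← neg_eq_zero, ← this]
    abel
  have hx : x₁ = x₂ := by simpa [z₁, z₂] using key y₀
  have hh : h₁ = h₂ := funext fun y => by simpa [hx] using key y
  have H3 : ∀ v, a₁ • A₁ v = a₂ • A₂ v := fun v => by
    simpa [z₁, z₂, hx] using H1 (v - x₁) y₀
  have haa : a₁ = a₂ := by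
    have := congrArg norm (H3 (EuclideanSpace.single ⟨0, hn⟩ 1))
    simpa [norm_smul, abs_of_pos ha₁, abs_of_pos ha₂] using this
  refine ⟨haa, ?_, hx, hh, H2⟩
  ext1 v
  have := H3 v
  rw [haa] at this
  exact smul_right_injective _ ha₂.ne' this

/-- Maps of the form `γ(x,y) = (a A (x + x₀ + h y), σ y)` are closed under
composition, their data `(a,A,x₀,h,σ)` is uniquely determined, the composite satisfies
`h_{γ₁∘γ₂} = h_{γ₂} + π_{γ₂} h_{γ₁}`, and consequently for any group `Γ` of such maps the
map `b : Γ* → E`, `b_γ = h_γ`, satisfies the 1-cocycle identity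
`b_{γ₂*γ₁} = b_{γ₂} + π_{γ₂} b_{γ₁}` for the `Γ*`-module structure `π` on `E`. -/
theorem formMaps_compose_and_cocycle (n : ℕ) (hn : 1 ≤ n)
    {Y : Type*} [MetricSpace Y] (y₀ : Y) (β : ℝ) (hβ0 : 0 < β) (hβ1 : β ≤ 1)
    {Γ : Type*} [Group Γ]
    (ρ : Γ →* Equiv.Perm (EuclideanSpace ℝ (Fin n) × Y))
    (a : Γ → ℝ) (ha : ∀ γ : Γ, 0 < a γ)
    (A : Γ → EuclideanSpace ℝ (Fin n) ≃ₗᵢ[ℝ] EuclideanSpace ℝ (Fin n))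
    (x : Γ → EuclideanSpace ℝ (Fin n))
    (h : Γ → Y → EuclideanSpace ℝ (Fin n))
    (hhE : ∀ γ : Γ, IsHolderZero n y₀ β (h γ))
    (σ : Γ → Y → Y)
    (hσ : ∀ γ : Γ, ∃ c : ℝ, 0 < c ∧ IsSimilarityWith c (σ γ))
    (hform : ∀ (γ : Γ) (p : EuclideanSpace ℝ (Fin n) × Y),
      ρ γ p = formMap n (a γ) (A γ) (x γ) (h γ) (σ γ) p) :
    -- closure under composition, with explicit data of the composite
    (∀ (a₁ a₂ : ℝ), 0 < a₁ → 0 < a₂ →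
      ∀ (A₁ A₂ : EuclideanSpace ℝ (Fin n) ≃ₗᵢ[ℝ] EuclideanSpace ℝ (Fin n))
        (x₁ x₂ : EuclideanSpace ℝ (Fin n)) (h₁ h₂ : Y → EuclideanSpace ℝ (Fin n)),
        IsHolderZero n y₀ β h₁ → IsHolderZero n y₀ β h₂ →
      ∀ σ₁ σ₂ : Y → Y,
        (∃ c : ℝ, 0 < c ∧ IsSimilarityWith c σ₁) →
        (∃ c : ℝ, 0 < c ∧ IsSimilarityWith c σ₂) →
        (formMap n a₁ A₁ x₁ h₁ σ₁ ∘ formMap n a₂ A₂ x₂ h₂ σ₂ =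
          formMap n (a₁ * a₂) (A₂.trans A₁)
            (x₂ + a₂⁻¹ • A₂.symm (x₁ + h₁ (σ₂ y₀)))
            (h₂ + piMap n y₀ a₂ A₂ σ₂ h₁) (σ₁ ∘ σ₂)) ∧
        0 < a₁ * a₂ ∧
        IsHolderZero n y₀ β (h₂ + piMap n y₀ a₂ A₂ σ₂ h₁) ∧
        (∃ c : ℝ, 0 < c ∧ IsSimilarityWith c (σ₁ ∘ σ₂))) ∧
    -- uniqueness of the data
    (∀ (a₁ a₂ : ℝ), 0 < a₁ → 0 < a₂ →
      ∀ (A₁ A₂ : EuclideanSpace ℝ (Fin n) ≃ₗᵢ[ℝ] EuclideanSpace ℝ (Fin n))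
        (x₁ x₂ : EuclideanSpace ℝ (Fin n)) (h₁ h₂ : Y → EuclideanSpace ℝ (Fin n)),
        IsHolderZero n y₀ β h₁ → IsHolderZero n y₀ β h₂ →
      ∀ σ₁ σ₂ : Y → Y,
        (∃ c : ℝ, 0 < c ∧ IsSimilarityWith c σ₁) →
        (∃ c : ℝ, 0 < c ∧ IsSimilarityWith c σ₂) →
        formMap n a₁ A₁ x₁ h₁ σ₁ = formMap n a₂ A₂ x₂ h₂ σ₂ →
        a₁ = a₂ ∧ A₁ = A₂ ∧ x₁ = x₂ ∧ h₁ = h₂ ∧ σ₁ = σ₂) ∧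
    -- the cocycle identity for the group Γ
    (∀ γ₁ γ₂ : Γ,
      h (γ₁ * γ₂) = h γ₂ + piMap n y₀ (a γ₂) (A γ₂) (σ γ₂) (h γ₁)) := by
  refine ⟨?_, ?_, ?_⟩
  · intro a₁ a₂ ha₁ ha₂ A₁ A₂ x₁ x₂ h₁ h₂ H₁ H₂ σ₁ σ₂ s₁ s₂
    exact ⟨aux_comp n y₀ a₁ a₂ ha₂ A₁ A₂ x₁ x₂ h₁ h₂ σ₁ σ₂, mul_pos ha₁ ha₂,
      aux_holder n y₀ β hβ0 hβ1 a₂ ha₂ A₂ h₁ h₂ σ₂ H₁ H₂ s₂, aux_sim σ₁ σ₂ s₁ s₂⟩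
  · intro a₁ a₂ ha₁ ha₂ A₁ A₂ x₁ x₂ h₁ h₂ H₁ H₂ σ₁ σ₂ s₁ s₂ H
    exact aux_unique n hn y₀ a₁ a₂ ha₁ ha₂ A₁ A₂ x₁ x₂ h₁ h₂ σ₁ σ₂ H₁.2 H₂.2 H
  · intro γ₁ γ₂
    have hc := aux_comp n y₀ (a γ₁) (a γ₂) (ha γ₂) (A γ₁) (A γ₂) (x γ₁) (x γ₂) (h γ₁) (h γ₂)
      (σ γ₁) (σ γ₂)
    have hE := aux_holder n y₀ β hβ0 hβ1 (a γ₂) (ha γ₂) (A γ₂) (h γ₁) (h γ₂) (σ γ₂) (hhE γ₁)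
      (hhE γ₂) (hσ γ₂)
    refine (aux_unique n hn y₀ _ _ (ha (γ₁ * γ₂)) (mul_pos (ha γ₁) (ha γ₂))
      (A (γ₁ * γ₂)) _ (x (γ₁ * γ₂)) _ _ _ (σ (γ₁ * γ₂)) _
      (hhE (γ₁ * γ₂)).2 hE.2 (Eq.trans ?_ hc)).2.2.2.1
    funext p
    rw [← hform, map_mul, Equiv.Perm.mul_apply, hform, hform, Function.comp_apply]
end

section
/- Let (Y,d) be a metric space with basepoint y₀, 0 < β ≤ 1, equip ℝⁿ × Y with the metric D((x₁,y₁),(x₂,y₂)) = max{|x₁−x₂|^β, d(y₁,y₂)}, and let E be the space of maps h: Y → ℝⁿ Lipschitz as maps (Y,d) → (ℝⁿ,|·|^β) with h(y₀) = 0. Let Γ be a group of bijections of ℝⁿ × Y, each of the form γ(x,y) = (a_γ A_γ(x + x_γ + h_γ(y)), σ_γ(y)) with a_γ > 0, A_γ ∈ O(n), x_γ ∈ ℝⁿ, h_γ ∈ E, and σ_γ a similarity of Y with similarity constant a_γ^β. If the cocycle b: Γ* → E, b_γ = h_γ, is a coboundary, i.e., there is h₀ ∈ E with h_γ = h₀ −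 π_γ h₀ for all γ ∈ Γ (where (π_γ h)(y) = a_γ^{-1} A_γ^{-1} h(σ_γ(y)) − a_γ^{-1} A_γ^{-1} h(σ_γ(y₀))), then the map H₀: ℝⁿ × Y → ℝⁿ × Y, H₀(x,y) = (x + h₀(y), y), is a biLipschitz bijection and every element of H₀ Γ H₀^{-1} is a similarity of (ℝⁿ × Y, D); explicitly, H₀ ∘ γ ∘ H₀^{-1}(x,y) = (a_γ A_γ [x + x_γ + a_γ^{-1} A_γ^{-1} h₀(σ_γ(y₀))], σ_γ(y)). -/
/-- The shear map `H(x,y) = (x + h₀ y, y)` of `ℝⁿ × Y`. -/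
def shear (n : ℕ) {Y : Type*} (h₀ : Y → EuclideanSpace ℝ (Fin n)) :
    EuclideanSpace ℝ (Fin n) × Y → EuclideanSpace ℝ (Fin n) × Y :=
  fun p => (p.1 + h₀ p.2, p.2)

theorem shear_upper (n : ℕ) {Y : Type*} [MetricSpace Y] (β : ℝ) (hβ0 : 0 < β) (hβ1 : β ≤ 1)
    (g : Y → EuclideanSpace ℝ (Fin n)) (K : ℝ) (hK : 0 ≤ K)
    (hg : ∀ y₁ y₂ : Y, ‖g y₁ - g y₂‖ ^ β ≤ K * dist y₁ y₂)
    (p q : EuclideanSpace ℝ (Fin n) × Y) :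
    prodDist n β (shear n g p) (shear n g q) ≤ (1 + K) * prodDist n β p q := by
  have h1 : ‖p.1 - q.1‖ ^ β ≤ prodDist n β p q := le_max_left _ _
  have h2 : dist p.2 q.2 ≤ prodDist n β p q := le_max_right _ _
  have h3 : 0 ≤ prodDist n β p q := le_trans dist_nonneg h2
  have h4 := mul_le_mul_of_nonneg_left h2 hK
  refine max_le ?_ ?_
  · have e : (shear n g p).1 - (shear n g q).1 = (p.1 - q.1) + (g p.2 - g q.2) := by
      simp only [shear]; abel
    rw [e]
    calc ‖(p.1 - q.1) + (g p.2 - g q.2)‖ ^ β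
        ≤ (‖p.1 - q.1‖ + ‖g p.2 - g q.2‖) ^ β :=
          Real.rpow_le_rpow (norm_nonneg _) (norm_add_le _ _) hβ0.le
      _ ≤ ‖p.1 - q.1‖ ^ β + ‖g p.2 - g q.2‖ ^ β :=
          Real.rpow_add_le_add_rpow (norm_nonneg _) (norm_nonneg _) hβ0.le hβ1
      _ ≤ (1 + K) * prodDist n β p q := by
          have := hg p.2 q.2
          linarith
  · change dist p.2 q.2 ≤ _
    nlinarith [mul_nonneg hK h3]

/-- Lemma 3.3: If the cocycle `b_γ = h_γ` is a coboundary,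
`h_γ = h₀ − π_γ h₀` with `h₀ ∈ E`, then `H₀(x,y) = (x + h₀ y, y)` is a biLipschitz bijection
of `(ℝⁿ × Y, D)` and every element of `H₀ Γ H₀⁻¹` is a similarity; explicitly
`H₀ ∘ γ ∘ H₀⁻¹ (x,y) = (a_γ A_γ[x + x_γ + a_γ⁻¹ A_γ⁻¹ h₀(σ_γ y₀)], σ_γ y)`. -/
theorem coboundary_conjugates_to_similarities (n : ℕ)
    {Y : Type*} [MetricSpace Y] (y₀ : Y) (β : ℝ) (hβ0 : 0 < β) (hβ1 : β ≤ 1)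
    {Γ : Type*} [Group Γ]
    (ρ : Γ →* Equiv.Perm (EuclideanSpace ℝ (Fin n) × Y))
    (a : Γ → ℝ) (ha : ∀ γ : Γ, 0 < a γ)
    (A : Γ → EuclideanSpace ℝ (Fin n) ≃ₗᵢ[ℝ] EuclideanSpace ℝ (Fin n))
    (x : Γ → EuclideanSpace ℝ (Fin n))
    (h : Γ → Y → EuclideanSpace ℝ (Fin n))
    (hhE : ∀ γ : Γ, IsHolderZero n y₀ β (h γ))
    (σ : Γ → Y → Y)
    (hσ : ∀ γ : Γ, Function.Bijective (σ γ) ∧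
      ∀ y y' : Y, dist (σ γ y) (σ γ y') = a γ ^ β * dist y y')
    (hform : ∀ (γ : Γ) (p : EuclideanSpace ℝ (Fin n) × Y),
      ρ γ p = (a γ • A γ (p.1 + x γ + h γ p.2), σ γ p.2))
    (h₀ : Y → EuclideanSpace ℝ (Fin n)) (hh₀ : IsHolderZero n y₀ β h₀)
    (hcob : ∀ γ : Γ, h γ = h₀ - piMap n y₀ (a γ) (A γ) (σ γ) h₀) :
    (shear n h₀ ∘ shear n (-h₀) = id ∧ shear n (-h₀) ∘ shear n h₀ = id) ∧
    (∃ L : ℝ, 1 ≤ L ∧ ∀ p q : EuclideanSpace ℝ (Fin n) × Y,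
      prodDist n β p q / L ≤ prodDist n β (shear n h₀ p) (shear n h₀ q) ∧
        prodDist n β (shear n h₀ p) (shear n h₀ q) ≤ L * prodDist n β p q) ∧
    (∀ (γ : Γ) (p : EuclideanSpace ℝ (Fin n) × Y),
      shear n h₀ (ρ γ (shear n (-h₀) p)) =
        (a γ • A γ (p.1 + x γ + (a γ)⁻¹ • (A γ).symm (h₀ (σ γ y₀))), σ γ p.2)) ∧
    (∀ γ : Γ, ∃ c : ℝ, 0 < c ∧ ∀ p q : EuclideanSpace ℝ (Fin n) × Y,
      prodDist n β (shear n h₀ (ρ γ (shear n (-h₀) p)))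
          (shear n h₀ (ρ γ (shear n (-h₀) q))) = c * prodDist n β p q) := by
  have inv1 : ∀ p, shear n h₀ (shear n (-h₀) p) = p := fun p => by simp [shear]
  have inv2 : ∀ p, shear n (-h₀) (shear n h₀ p) = p := fun p => by simp [shear]
  have key : ∀ (γ : Γ) (p : EuclideanSpace ℝ (Fin n) × Y),
      shear n h₀ (ρ γ (shear n (-h₀) p)) =
        (a γ • A γ (p.1 + x γ + (a γ)⁻¹ • (A γ).symm (h₀ (σ γ y₀))), σ γ p.2) := by
    intro γ p
    have hne : a γ ≠ 0 := (ha γ).ne'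
    rw [hform, hcob]
    simp only [shear, piMap, Pi.sub_apply, Pi.neg_apply, map_add, map_sub, map_neg, map_smul,
      smul_add, smul_sub, smul_neg, LinearIsometryEquiv.apply_symm_apply, smul_inv_smul₀ hne]
    refine Prod.ext ?_ rfl
    simp only
    abel
  refine ⟨⟨funext inv1, funext inv2⟩, ?_, key, ?_⟩
  · obtain ⟨⟨K, hK⟩, -⟩ := hh₀
    have hK' : ∀ y₁ y₂ : Y, ‖h₀ y₁ - h₀ y₂‖ ^ β ≤ max K 0 * dist y₁ y₂ := fun y₁ y₂ =>
      (hK y₁ y₂).trans (mul_le_mul_of_nonneg_right (le_max_left _ _) dist_nonneg)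
    have hK'' : ∀ y₁ y₂ : Y, ‖(-h₀) y₁ - (-h₀) y₂‖ ^ β ≤ max K 0 * dist y₁ y₂ := fun y₁ y₂ => by
      have e : (-h₀) y₁ - (-h₀) y₂ = -(h₀ y₁ - h₀ y₂) := by
        simp only [Pi.neg_apply]; abel
      rw [e, norm_neg]
      exact hK' y₁ y₂
    have h0 : 0 ≤ max K 0 := le_max_right _ _
    refine ⟨1 + max K 0, by linarith, fun p q => ⟨?_, shear_upper n β hβ0 hβ1 h₀ _ h0 hK' p q⟩⟩
    have := shear_upper n β hβ0 hβ1 (-h₀) _ h0 hK'' (shear n h₀ p) (shear n h₀ q)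
    rw [inv2, inv2] at this
    rw [div_le_iff₀ (by linarith), mul_comm]
    exact this
  · intro γ
    have hc : 0 < a γ ^ β := Real.rpow_pos_of_pos (ha γ) β
    refine ⟨a γ ^ β, hc, fun p q => ?_⟩
    rw [key, key]
    simp only [prodDist]
    rw [mul_max_of_nonneg _ _ hc.le, (hσ γ).2, ← smul_sub, ← map_sub, norm_smul,
      LinearIsometryEquiv.norm_map, add_assoc, add_assoc, add_sub_add_right_eq_sub,
      Real.norm_of_nonneg (ha γ).le, Real.mul_rpow (ha γ).le (norm_nonneg _)]
end
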